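/- arXiv:2204.09740 — 3 statements merged into one kernel-verified Lean document; each statement's English description precedes it below -/
import Mathlib

section
/- Let Z ⊂ ℝ^n and W ⊂ ℝ^m be constrained zonotopes with data (G_z, c_z, A_z, b_z) and (G_w, c_w, A_w, b_w) respectively. Then the Cartesian product Z × W = {(z, w) ∈ ℝ^{n+m} : z ∈ Z, w ∈ W} is exactly the constrained zonotope in ℝ^{n+m} with generator matrix the block-diagonal matrix [[G_z, 0],[0, G_w]], center (c_z, c_w), constraint matrix the block-diagonal matrix [[A_z, 0],[0, A_w]], and constraint vector (b_z, b_w). -/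
open Matrix

/-- A constrained zonotope with generator matrix `G`, center `c`,
constraint matrix `A` and constraint vector `b`.  Here `N → ℝ` carries the
supremum norm (the default norm on Pi types). -/
def CZ {N NG NC : Type*} [Fintype N] [Fintype NG] [Fintype NC]
    (G : Matrix N NG ℝ) (c : N → ℝ) (A : Matrix NC NG ℝ) (b : NC → ℝ) :
    Set (N → ℝ) :=
  {x | ∃ ξ : NG → ℝ, ‖ξ‖ ≤ 1 ∧ A.mulVec ξ = b ∧ x = c + G.mulVec ξ}

/-!
The parameter vectors of the block-diagonal data are the stacked vectors `Sum.elim ξ η`.  For the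
supremum norm, the unit ball of stacked vectors is the product of the two unit balls (which would
fail for the Euclidean norm), and block-diagonal matrices act on the two halves separately, so all
conditions decouple.
-/

section SumElim

variable {ι κ α : Type*}

theorem sumElim_eq_sumElim_iff {x x' : ι → α} {y y' : κ → α} :
    Sum.elim x y = Sum.elim x' y' ↔ x = x' ∧ y = y' := by
  simp only [funext_iff, Sum.forall, Sum.elim_inl, Sum.elim_inr]

theorem exists_iff_exists_sumElim {p : (ι ⊕ κ → α) → Prop} :
    (∃ f, p f) ↔ ∃ x y, p (Sum.elim x y) :=
  ⟨fun ⟨f, hf⟩ => ⟨f ∘ Sum.inl, f ∘ Sum.inr, by rwa [Sum.elim_comp_inl_inr]⟩,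
    fun ⟨x, y, h⟩ => ⟨Sum.elim x y, h⟩⟩

theorem norm_sumElim [Fintype ι] [Fintype κ] [SeminormedAddGroup α] (x : ι → α) (y : κ → α) :
    ‖Sum.elim x y‖ = max ‖x‖ ‖y‖ :=
  (IsometryEquiv.sumArrowIsometryEquivProdArrow.isometry.norm_map_of_map_zero rfl
    (Sum.elim x y)).symm

end SumElim

theorem fromBlocks_zero_zero_mulVec_sumElim {l m n o R : Type*} [Fintype n] [Fintype o]
    [NonUnitalNonAssocSemiring R] (A : Matrix l n R) (B : Matrix m o R) (x : n → R) (y : o → R) :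
    fromBlocks A 0 0 B *ᵥ Sum.elim x y = Sum.elim (A *ᵥ x) (B *ᵥ y) := by
  simp only [fromBlocks_mulVec, Sum.elim_comp_inl, Sum.elim_comp_inr, zero_mulVec, add_zero,
    zero_add]

section ConstrainedZonotope

variable {N M NG MG NC MC : Type*} [Fintype N] [Fintype M] [Fintype NG] [Fintype MG]
  [Fintype NC] [Fintype MC]
  (Gz : Matrix N NG ℝ) (cz : N → ℝ) (Az : Matrix NC NG ℝ) (bz : NC → ℝ)
  (Gw : Matrix M MG ℝ) (cw : M → ℝ) (Aw : Matrix MC MG ℝ) (bw : MC → ℝ)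

theorem sumElim_mem_CZ_fromBlocks_iff {z : N → ℝ} {w : M → ℝ} :
    Sum.elim z w ∈ CZ (fromBlocks Gz 0 0 Gw) (Sum.elim cz cw)
        (fromBlocks Az 0 0 Aw) (Sum.elim bz bw) ↔
      z ∈ CZ Gz cz Az bz ∧ w ∈ CZ Gw cw Aw bw := by
  simp only [CZ, Set.mem_ofPred_eq, exists_iff_exists_sumElim, norm_sumElim, max_le_iff,
    fromBlocks_zero_zero_mulVec_sumElim, ← Sum.elim_add_add, sumElim_eq_sumElim_iff]
  constructor
  · rintro ⟨ξ, η, ⟨hξ, hη⟩, ⟨hAξ, hAη⟩, hz, hw⟩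
    exact ⟨⟨ξ, hξ, hAξ, hz⟩, ⟨η, hη, hAη, hw⟩⟩
  · rintro ⟨⟨ξ, hξ, hAξ, hz⟩, ⟨η, hη, hAη, hw⟩⟩
    exact ⟨ξ, η, ⟨hξ, hη⟩, ⟨hAξ, hAη⟩, hz, hw⟩

theorem cartesian_product_of_CZ_general :
    {v : N ⊕ M → ℝ | v ∘ Sum.inl ∈ CZ Gz cz Az bz ∧ v ∘ Sum.inr ∈ CZ Gw cw Aw bw} =
      CZ (fromBlocks Gz 0 0 Gw) (Sum.elim cz cw)
        (fromBlocks Az 0 0 Aw) (Sum.elim bz bw) := by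
  ext v
  rw [Set.mem_ofPred_eq, ← sumElim_mem_CZ_fromBlocks_iff, Sum.elim_comp_inl_inr]

end ConstrainedZonotope

/-- the Cartesian product of the constrained zonotopes
`Z = {Gz, cz, Az, bz} ⊆ ℝ^n` and `W = {Gw, cw, Aw, bw} ⊆ ℝ^m`, viewed as a subset
of ℝ^{n+m} (vectors indexed by `Fin n ⊕ Fin m`), is exactly the constrained zonotope
`{blkdiag(Gz, Gw), (cz, cw), blkdiag(Az, Aw), (bz, bw)}`. -/
theorem cartesian_product_of_CZ {n m ngz ncz ngw ncw : ℕ}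
    (Gz : Matrix (Fin n) (Fin ngz) ℝ) (cz : Fin n → ℝ)
    (Az : Matrix (Fin ncz) (Fin ngz) ℝ) (bz : Fin ncz → ℝ)
    (Gw : Matrix (Fin m) (Fin ngw) ℝ) (cw : Fin m → ℝ)
    (Aw : Matrix (Fin ncw) (Fin ngw) ℝ) (bw : Fin ncw → ℝ) :
    {v : Fin n ⊕ Fin m → ℝ |
        (fun i => v (Sum.inl i)) ∈ CZ Gz cz Az bz ∧
        (fun j => v (Sum.inr j)) ∈ CZ Gw cw Aw bw} =
      CZ (Matrix.fromBlocks Gz 0 0 Gw) (Sum.elim cz cw)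
        (Matrix.fromBlocks Az 0 0 Aw) (Sum.elim bz bw) :=
  cartesian_product_of_CZ_general Gz cz Az bz Gw cw Aw bw
end

section
/- Let J be an interval matrix in 𝕀ℝ^{n×m} given by bounds J^L ≤ J^U, let Ḡ ∈ ℝ^{m×n̄_g} and c̄ ∈ ℝ^m define the zonotope X̄ = {c̄ + Ḡ ξ : ‖ξ‖_∞ ≤ 1}, and let m ∈ 𝕀ℝ^n be an interval vector with mid(m) = 0 such that (Ĵ − mid(J)) c̄ ∈ m for every Ĵ ∈ J. Define the diagonal matrix P ∈ ℝ^{n×n} by P_{ii} = rad(m_i) + Σ_{j=1}^{n̄_g} Σ_{k=1}^{m} rad(J_{ik}) |Ḡ_{kj}|. Then for every matrix Ĵ ∈ J and every x ∈ X̄, the vector (Ĵ − mid(J)) x satisfies |((Ĵ − mid(J)) x)_i| ≤ P_{ii} for all i; equivalently, (Ĵ − mid(J)) x ∈ P·B_∞^n, where B_∞^n is the unit ball of the supremum norm in ℝ^n. -/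
open Matrix

/-- A zonotope with generator matrix `G` and center `c`.  Here `N → ℝ` carries the
supremum norm (the default norm on Pi types). -/
def Zono {N NG : Type*} [Fintype N] [Fintype NG]
    (G : Matrix N NG ℝ) (c : N → ℝ) : Set (N → ℝ) :=
  {x | ∃ ξ : NG → ℝ, ‖ξ‖ ≤ 1 ∧ x = c + G.mulVec ξ}

/-!
The rows of `Ĵ - mid J` are dominated entrywise by those of `rad J`, and a point of the zonotope
differs from its center in coordinate `k` by at most the absolute row sum `∑ j, |G k j|`. Split
`x = c + (x - c)`: the center contributes at most `rad m`, since `mid m = 0`, and the displacement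
contributes at most `rad J` applied to the absolute row sums of `G`.
-/

theorem abs_dotProduct_le {κ R : Type*} [Fintype κ] [Ring R] [LinearOrder R]
    [IsOrderedRing R] {u v a b : κ → R} (hu : ∀ k, |u k| ≤ a k) (hv : ∀ k, |v k| ≤ b k) :
    |u ⬝ᵥ v| ≤ a ⬝ᵥ b :=
  (Finset.abs_sum_le_sum_abs _ _).trans <| Finset.sum_le_sum fun k _ ↦ by
    rw [abs_mul]
    exact mul_le_mul (hu k) (hv k) (abs_nonneg _) ((abs_nonneg _).trans (hu k))

theorem abs_sub_half_add_le_iff {K : Type*} [Field K] [LinearOrder K] [IsStrictOrderedRing K]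
    {a b x : K} : |x - (a + b) / 2| ≤ (b - a) / 2 ↔ a ≤ x ∧ x ≤ b := by
  rw [abs_le]
  constructor <;> rintro ⟨hl, hu⟩ <;> constructor <;> linarith

section Zonotope

variable {κ ν : Type*} [Fintype κ] [Fintype ν] {G : Matrix κ ν ℝ} {c x : κ → ℝ}

theorem abs_sub_center_apply_le_of_mem_zono (hx : x ∈ Zono G c) (k : κ) :
    |(x - c) k| ≤ ∑ j, |G k j| := by
  obtain ⟨ξ, hξ, rfl⟩ := hx
  have hξj (j : ν) : |ξ j| ≤ 1 := (norm_le_pi_norm ξ j).trans hξ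
  calc |(c + G *ᵥ ξ - c) k| = |G k ⬝ᵥ ξ| := by rw [add_sub_cancel_left, mulVec]
    _ ≤ (fun j ↦ |G k j|) ⬝ᵥ 1 := abs_dotProduct_le (fun _ ↦ le_rfl) hξj
    _ = ∑ j, |G k j| := dotProduct_one _

theorem abs_dotProduct_le_of_mem_zono {d r : κ → ℝ} (hd : ∀ k, |d k| ≤ r k)
    (hx : x ∈ Zono G c) : |d ⬝ᵥ x| ≤ |d ⬝ᵥ c| + ∑ j, ∑ k, r k * |G k j| := by
  calc |d ⬝ᵥ x| = |d ⬝ᵥ c + d ⬝ᵥ (x - c)| := by rw [← dotProduct_add, add_sub_cancel]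
    _ ≤ |d ⬝ᵥ c| + |d ⬝ᵥ (x - c)| := abs_add_le _ _
    _ ≤ |d ⬝ᵥ c| + r ⬝ᵥ fun k ↦ ∑ j, |G k j| := by
        gcongr
        exact abs_dotProduct_le hd (abs_sub_center_apply_le_of_mem_zono hx)
    _ = |d ⬝ᵥ c| + ∑ j, ∑ k, r k * |G k j| := by
        simp only [dotProduct, Finset.mul_sum]
        rw [Finset.sum_comm]

end Zonotope

theorem interval_matrix_error_bound_general {ι κ ν : Type*} [Fintype κ] [Fintype ν]
    (JL JU : Matrix ι κ ℝ) (G : Matrix κ ν ℝ) (c : κ → ℝ)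
    (mL mU : ι → ℝ) (hmid : ∀ i, (mL i + mU i) / 2 = 0)
    (Jhat : Matrix ι κ ℝ) (hJhat : ∀ i k, JL i k ≤ Jhat i k ∧ Jhat i k ≤ JU i k)
    (hm : ∀ i, mL i ≤ ((Jhat - (1 / 2 : ℝ) • (JL + JU)) *ᵥ c) i ∧
      ((Jhat - (1 / 2 : ℝ) • (JL + JU)) *ᵥ c) i ≤ mU i)
    (x : κ → ℝ) (hx : x ∈ Zono G c) (i : ι) :
    |((Jhat - (1 / 2 : ℝ) • (JL + JU)) *ᵥ x) i| ≤
      (mU i - mL i) / 2 + ∑ j, ∑ k, ((JU i k - JL i k) / 2) * |G k j| := by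
  set D := Jhat - (1 / 2 : ℝ) • (JL + JU)
  have entry_le (k : κ) : |D i k| ≤ (JU i k - JL i k) / 2 := by
    have hD : D i k = Jhat i k - (JL i k + JU i k) / 2 := by
      simp only [D, Matrix.sub_apply, Matrix.smul_apply, Matrix.add_apply, smul_eq_mul,
        one_div_mul_eq_div]
    rw [hD]
    exact abs_sub_half_add_le_iff.2 (hJhat i k)
  have center_le : |(D *ᵥ c) i| ≤ (mU i - mL i) / 2 := by
    simpa only [hmid i, sub_zero] using abs_sub_half_add_le_iff.2 (hm i)
  calc |(D *ᵥ x) i| ≤ |(D *ᵥ c) i| + ∑ j, ∑ k, ((JU i k - JL i k) / 2) * |G k j| :=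
        abs_dotProduct_le_of_mem_zono entry_le hx
    _ ≤ (mU i - mL i) / 2 + ∑ j, ∑ k, ((JU i k - JL i k) / 2) * |G k j| := by gcongr

/-- let `J` be the interval matrix with bounds `JL ≤ JU`
(so `mid J = (JL + JU)/2` and `rad J = (JU - JL)/2`), let
`X̄ = {c̄ + Ḡ ξ : ‖ξ‖_∞ ≤ 1}`, and let `m` be the interval vector with bounds
`mL ≤ mU`, midpoint zero, such that `(Ĵ - mid J) c̄ ∈ m` for every `Ĵ ∈ J`.
Then for every `Ĵ ∈ J` and every `x ∈ X̄` and every component `i`,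
`|((Ĵ - mid J) x)_i| ≤ P_ii = rad(m_i) + Σ_j Σ_k rad(J_ik) |Ḡ_kj|`. -/
theorem interval_matrix_error_bound {n m nbg : ℕ}
    (JL JU : Matrix (Fin n) (Fin m) ℝ) (hJle : ∀ i k, JL i k ≤ JU i k)
    (Gbar : Matrix (Fin m) (Fin nbg) ℝ) (cbar : Fin m → ℝ)
    (mL mU : Fin n → ℝ) (hmle : ∀ i, mL i ≤ mU i)
    (hmid : ∀ i, (mL i + mU i) / 2 = 0)
    (hm : ∀ Jhat : Matrix (Fin n) (Fin m) ℝ,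
      (∀ i k, JL i k ≤ Jhat i k ∧ Jhat i k ≤ JU i k) →
      ∀ i, mL i ≤ (Jhat - (1 / 2 : ℝ) • (JL + JU)).mulVec cbar i ∧
        (Jhat - (1 / 2 : ℝ) • (JL + JU)).mulVec cbar i ≤ mU i)
    (Jhat : Matrix (Fin n) (Fin m) ℝ)
    (hJhat : ∀ i k, JL i k ≤ Jhat i k ∧ Jhat i k ≤ JU i k)
    (x : Fin m → ℝ) (hx : x ∈ Zono Gbar cbar) :
    ∀ i, |(Jhat - (1 / 2 : ℝ) • (JL + JU)).mulVec x i| ≤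
      (mU i - mL i) / 2 + ∑ j, ∑ k, ((JU i k - JL i k) / 2) * |Gbar k j| := by
  exact interval_matrix_error_bound_general JL JU Gbar cbar mL mU hmid Jhat hJhat
    (hm Jhat hJhat) x hx
end

section
/- (CZ-inclusion) Let X ⊂ ℝ^m be a constrained zonotope with data (G, c, A, b), let J be an interval matrix in 𝕀ℝ^{n×m} with bounds J^L ≤ J^U, and consider the set S = J X = {Ĵ x : Ĵ ∈ J, x ∈ X} ⊂ ℝ^n. Let Ḡ ∈ ℝ^{n̄_g×?}, c̄ ∈ ℝ^m be such that X is contained in the zonotope {c̄ + Ḡ ξ : ‖ξ‖_∞ ≤ 1} with Ḡ ∈ ℝ^{m×n̄_g}, and let m ∈ 𝕀ℝ^n be an interval vector with mid(m) = 0 such that (Ĵ − mid(J)) c̄ ∈ m for every Ĵ ∈ J. Let P ∈ ℝ^{n×n} be the diagonal matrix with P_{ii} = rad(m_i) + Σ_{j=1}^{n̄_g} Σ_{k=1}^{m} rad(J_{ik}) |Ḡ_{kj}|. Then S ⊆ mid(J)·X ⊕ P·B_∞^n, where ⊕ denotes the Minkowski sum and B_∞^n is the closed unit ball of the supremum norm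 in ℝ^n. -/
open Matrix Pointwise

/-!
Write `Ĵ x = mid(J) x + (Ĵ - mid(J)) x` and bound the second summand row by row. With
`x = c̄ + Ḡ ξ`, the part `((Ĵ - mid(J)) Ḡ) ξ` has its `i`-th entry bounded by the absolute row sum
of `(Ĵ - mid(J)) Ḡ`, and `|Ĵ - mid(J)| ≤ rad(J)` entrywise. For the part `(Ĵ - mid(J)) c̄`, reflect
`Ĵ` in `mid(J)`: the interval vector `m` contains this part together with its negative, so each
entry is bounded in absolute value by both `m^U` and `-m^L`, hence by their average `rad(m)`.
-/

/-- The interval matrix with entrywise bounds `L` and `U`, encoded as the set of its members; it is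
empty unless `L ≤ U` entrywise. -/
def intervalMatrix {K N M : Type*} [LE K] (L U : Matrix N M K) : Set (Matrix N M K) :=
  {J | ∀ i k, L i k ≤ J i k ∧ J i k ≤ U i k}

namespace intervalMatrix

variable {K N M : Type*}

theorem add_sub_mem [AddCommGroup K] [PartialOrder K] [IsOrderedAddMonoid K]
    {L U J : Matrix N M K} (hJ : J ∈ intervalMatrix L U) : L + U - J ∈ intervalMatrix L U := by
  intro i k
  obtain ⟨hL, hU⟩ := hJ i k
  rw [Matrix.sub_apply, Matrix.add_apply, le_sub_iff_add_le, sub_le_iff_le_add, add_comm (U i k)]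
  exact ⟨by gcongr, by gcongr⟩

variable [Field K]

/-- The midpoint of the interval matrix with bounds `L` and `U`. -/
def mid (L U : Matrix N M K) : Matrix N M K :=
  (1 / 2 : K) • (L + U)

/-- The entrywise radius of the interval matrix with bounds `L` and `U`. -/
def rad (L U : Matrix N M K) : Matrix N M K :=
  fun i k => (U i k - L i k) / 2

theorem add_sub_sub_mid [NeZero (2 : K)] (L U J : Matrix N M K) :
    L + U - J - mid L U = -(J - mid L U) := by
  ext i k
  simp only [mid, Matrix.sub_apply, Matrix.neg_apply, Matrix.smul_apply, Matrix.add_apply,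
    smul_eq_mul]
  field_simp
  ring

variable [LinearOrder K] [IsStrictOrderedRing K] {L U J : Matrix N M K}

theorem abs_sub_mid_apply_le_rad (hJ : J ∈ intervalMatrix L U) (i : N) (k : M) :
    |(J - mid L U) i k| ≤ rad L U i k := by
  obtain ⟨hL, hU⟩ := hJ i k
  simp only [mid, rad, Matrix.sub_apply, Matrix.smul_apply, Matrix.add_apply, smul_eq_mul, abs_le]
  constructor <;> linarith

theorem abs_sub_mid_mulVec_apply_le [Fintype M] {v : M → K} {i : N} {l u : K}
    (hv : ∀ J ∈ intervalMatrix L U,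
      l ≤ ((J - mid L U) *ᵥ v) i ∧ ((J - mid L U) *ᵥ v) i ≤ u)
    (hJ : J ∈ intervalMatrix L U) :
    |((J - mid L U) *ᵥ v) i| ≤ (u - l) / 2 := by
  obtain ⟨hl, hu⟩ := hv J hJ
  have hreflect := hv (L + U - J) (add_sub_mem hJ)
  rw [add_sub_sub_mid, Matrix.neg_mulVec, Pi.neg_apply] at hreflect
  rw [abs_le]
  constructor <;> linarith [hreflect.1, hreflect.2]

end intervalMatrix

section RowBounds

variable {R N M NG : Type*} [NonUnitalSeminormedRing R]

theorem norm_mul_apply_le_of_norm_apply_le [Fintype M] {D : Matrix N M R} {B : Matrix N M ℝ}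
    (hD : ∀ i k, ‖D i k‖ ≤ B i k) (G : Matrix M NG R) (i : N) (j : NG) :
    ‖(D * G) i j‖ ≤ ∑ k, B i k * ‖G k j‖ :=
  calc ‖(D * G) i j‖
    _ = ‖∑ k, D i k * G k j‖ := by rw [Matrix.mul_apply]
    _ ≤ ∑ k, ‖D i k‖ * ‖G k j‖ := norm_sum_le_of_le _ fun _ _ => norm_mul_le _ _
    _ ≤ ∑ k, B i k * ‖G k j‖ := by gcongr; exact hD _ _

theorem norm_mulVec_apply_le_sum_norm [Fintype NG] (A : Matrix N NG R) {ξ : NG → R} (hξ : ‖ξ‖ ≤ 1)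
    (i : N) : ‖(A *ᵥ ξ) i‖ ≤ ∑ j, ‖A i j‖ := by
  refine norm_sum_le_of_le _ fun j _ => (norm_mul_le _ _).trans ?_
  exact mul_le_of_le_one_right (norm_nonneg _) ((norm_le_pi_norm ξ j).trans hξ)

end RowBounds

theorem abs_mulVec_apply_le_of_mem_zono {N M NG : Type*} [Fintype M] [Fintype NG]
    {D B : Matrix N M ℝ} (hD : ∀ i k, |D i k| ≤ B i k)
    {G : Matrix M NG ℝ} {c x : M → ℝ} (hx : x ∈ Zono G c) (i : N) :
    |(D *ᵥ x) i| ≤ |(D *ᵥ c) i| + ∑ j, ∑ k, B i k * |G k j| := by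
  obtain ⟨ξ, hξ, rfl⟩ := hx
  calc |(D *ᵥ (c + G *ᵥ ξ)) i|
    _ = |(D *ᵥ c) i + ((D * G) *ᵥ ξ) i| := by
      rw [Matrix.mulVec_add, Matrix.mulVec_mulVec, Pi.add_apply]
    _ ≤ |(D *ᵥ c) i| + |((D * G) *ᵥ ξ) i| := abs_add_le _ _
    _ ≤ |(D *ᵥ c) i| + ∑ j, |(D * G) i j| := by
      gcongr
      exact norm_mulVec_apply_le_sum_norm (D * G) hξ i
    _ ≤ |(D *ᵥ c) i| + ∑ j, ∑ k, B i k * |G k j| := by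
      gcongr with j
      exact norm_mul_apply_le_of_norm_apply_le hD G i j

theorem mem_image_diagonal_mulVec_closedBall_iff {𝕜 N : Type*} [NormedField 𝕜] [Fintype N]
    [DecidableEq N] {p y : N → 𝕜} :
    y ∈ (diagonal p).mulVec '' Metric.closedBall 0 1 ↔ ∀ i, ‖y i‖ ≤ ‖p i‖ := by
  constructor
  · rintro ⟨ξ, hξ, rfl⟩ i
    have hξi : ‖ξ i‖ ≤ 1 := (norm_le_pi_norm ξ i).trans (mem_closedBall_zero_iff.1 hξ)
    rw [Matrix.mulVec_diagonal, norm_mul]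
    exact mul_le_of_le_one_right (norm_nonneg _) hξi
  · intro hy
    refine ⟨y / p, ?_, funext fun i => ?_⟩
    · rw [mem_closedBall_zero_iff, pi_norm_le_iff_of_nonneg zero_le_one]
      intro i
      rw [Pi.div_apply, norm_div]
      exact div_le_one_of_le₀ (hy i) (norm_nonneg _)
    · have hzero : p i = 0 → y i = 0 := fun hp => by simpa [hp] using hy i
      rw [Matrix.mulVec_diagonal, Pi.div_apply, mul_div_cancel_of_imp' hzero]

open intervalMatrix in
theorem cz_inclusion_general {N M NG : Type*} [Fintype N] [DecidableEq N] [Fintype M] [Fintype NG]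
    {X : Set (M → ℝ)} {L U : Matrix N M ℝ} {G : Matrix M NG ℝ} {c : M → ℝ} (hX : X ⊆ Zono G c)
    {mL mU : N → ℝ}
    (hm : ∀ J ∈ intervalMatrix L U, ∀ i,
      mL i ≤ ((J - mid L U) *ᵥ c) i ∧ ((J - mid L U) *ᵥ c) i ≤ mU i) :
    Set.image2 mulVec (intervalMatrix L U) X ⊆
      (mid L U).mulVec '' X +
        (diagonal fun i => (mU i - mL i) / 2 + ∑ j, ∑ k, rad L U i k * |G k j|).mulVec ''
          Metric.closedBall 0 1 := by
  rintro _ ⟨J, hJ, x, hx, rfl⟩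
  have hsplit : mid L U *ᵥ x + (J - mid L U) *ᵥ x = J *ᵥ x := by
    rw [← Matrix.add_mulVec, add_sub_cancel]
  rw [← hsplit]
  refine Set.add_mem_add (Set.mem_image_of_mem _ hx) ?_
  refine mem_image_diagonal_mulVec_closedBall_iff.2 fun i => le_trans ?_ (le_abs_self _)
  calc |((J - mid L U) *ᵥ x) i|
    _ ≤ |((J - mid L U) *ᵥ c) i| + ∑ j, ∑ k, rad L U i k * |G k j| :=
      abs_mulVec_apply_le_of_mem_zono (abs_sub_mid_apply_le_rad hJ) (hX hx) i
    _ ≤ (mU i - mL i) / 2 + ∑ j, ∑ k, rad L U i k * |G k j| := by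
      gcongr
      exact abs_sub_mid_mulVec_apply_le (fun J hJ => hm J hJ i) hJ

/-- CZ-inclusion: let `X = {G, c, A, b}` be a constrained zonotope
contained in the zonotope `{Ḡ, c̄}`, let `J` be the interval matrix with bounds
`JL ≤ JU`, and let `m` be an interval vector with midpoint zero such that
`(Ĵ - mid J) c̄ ∈ m` for every `Ĵ ∈ J`.  With
`P = diag(rad(m_i) + Σ_j Σ_k rad(J_ik) |Ḡ_kj|)`, the set
`S = J X = {Ĵ x : Ĵ ∈ J, x ∈ X}` satisfies `S ⊆ mid(J)·X ⊕ P·B_∞^n`. -/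
theorem cz_inclusion {n m ng nc nbg : ℕ}
    (G : Matrix (Fin m) (Fin ng) ℝ) (c : Fin m → ℝ)
    (A : Matrix (Fin nc) (Fin ng) ℝ) (b : Fin nc → ℝ)
    (JL JU : Matrix (Fin n) (Fin m) ℝ) (hJle : ∀ i k, JL i k ≤ JU i k)
    (Gbar : Matrix (Fin m) (Fin nbg) ℝ) (cbar : Fin m → ℝ)
    (hXsub : CZ G c A b ⊆ Zono Gbar cbar)
    (mL mU : Fin n → ℝ) (hmle : ∀ i, mL i ≤ mU i)
    (hmid : ∀ i, (mL i + mU i) / 2 = 0)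
    (hm : ∀ Jhat : Matrix (Fin n) (Fin m) ℝ,
      (∀ i k, JL i k ≤ Jhat i k ∧ Jhat i k ≤ JU i k) →
      ∀ i, mL i ≤ (Jhat - (1 / 2 : ℝ) • (JL + JU)).mulVec cbar i ∧
        (Jhat - (1 / 2 : ℝ) • (JL + JU)).mulVec cbar i ≤ mU i) :
    {s : Fin n → ℝ | ∃ Jhat : Matrix (Fin n) (Fin m) ℝ,
        (∀ i k, JL i k ≤ Jhat i k ∧ Jhat i k ≤ JU i k) ∧
        ∃ x ∈ CZ G c A b, s = Jhat.mulVec x} ⊆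
      ((1 / 2 : ℝ) • (JL + JU)).mulVec '' CZ G c A b +
        (Matrix.diagonal fun i =>
            (mU i - mL i) / 2 + ∑ j, ∑ k, ((JU i k - JL i k) / 2) * |Gbar k j|).mulVec ''
          Metric.closedBall (0 : Fin n → ℝ) 1 := by
  rintro _ ⟨J, hJ, x, hx, rfl⟩
  exact cz_inclusion_general hXsub hm ⟨J, hJ, x, hx, rfl⟩
end
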